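/- Let T=(V,E) be a leafless directed tree with a root, let λ={λ_v}_{v∈V} be a sequence of positive real numbers, and let 1 < q < ∞. Assume the operator S* : L^q(T,λ) → L^q(T,λ), defined by (S* g)(u) = Σ_{v∈child(u)} g(v) λ_v/λ_u, is bounded. If there exists an increasing sequence of natural numbers {n_k} such that for all u ∈ V one has γ(u,n_k)^{−q} Σ_{v∈child^{n_k}(u)} λ_v^{1−q} → 0 as k → ∞, then S* is hypercyclic. -/

import Mathlib

open Filter

attribute [local instance] Classical.propDecidable
open scoped ENNReal

/-- A directed tree: a locally finite directed graph on a (countably infinite)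
vertex set with no directed circuits, whose underlying undirected graph is
connected, and in which every vertex has indegree at most one. -/
structure DirTree (V : Type) where
  E : V → V → Prop
  finIn : ∀ v : V, {u : V | E u v}.Finite
  finOut : ∀ v : V, {u : V | E v u}.Finite
  noCircuit : ∀ (n : ℕ) (c : Fin (n + 1) → V), Function.Injective c →
    (∀ i : Fin n, E (c i.castSucc) (c i.succ)) → ¬ E (c (Fin.last n)) (c 0)
  conn : (SimpleGraph.fromRel E).Connected
  indeg : ∀ ⦃u w v : V⦄, E u v → E w v → u = w

namespace DirTree

variable {V : Type} (T : DirTree V)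

/-- A root is a vertex of indegree zero. -/
def IsRoot (r : V) : Prop := ∀ u : V, ¬ T.E u r

/-- The set of children of a vertex. -/
def child (u : V) : Set V := {v : V | T.E u v}

/-- A leaf is a vertex of outdegree zero. -/
def IsLeaf (u : V) : Prop := ¬ (T.child u).Nonempty

/-- The (forward) shift `(S f)(v) = f (parent v)`, with `(S f)(root) = 0`. -/
noncomputable def shift (f : V → ℂ) (v : V) : ℂ :=
  if h : ∃ u : V, T.E u v then f h.choose else 0

/-- The backward shift `(B f)(u) = ∑_{v ∈ child u} f v`. -/
noncomputable def bwd (f : V → ℂ) (u : V) : ℂ :=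
  ∑' v : T.child u, f v.1

/-- The operator `(S* g)(u) = ∑_{v ∈ child u} g v · λ_v / λ_u`. -/
noncomputable def sstar (lam : V → ℝ) (g : V → ℂ) (u : V) : ℂ :=
  ∑' v : T.child u, g v.1 * ((lam v.1 / lam u : ℝ) : ℂ)

/-- `childN n u` is the set of vertices `v` with `parentⁿ v = u`. -/
def childN (T : DirTree V) : ℕ → V → Set V
  | 0, u => {u}
  | n + 1, u => {w : V | ∃ v ∈ T.child u, w ∈ childN T n v}

/-- `γ(u,n)`, the cardinality of `childN n u`. -/
noncomputable def gam (u : V) (n : ℕ) : ℕ := (T.childN n u).ncard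

/-- The `n`-th ancestor `parentⁿ u` of `u` (junk value `u` if it does not exist). -/
noncomputable def anc (u : V) (n : ℕ) : V :=
  if h : ∃ w : V, u ∈ T.childN n w then h.choose else u

/-- A leafless directed tree has a free end if some vertex is such that all of
its descendants have outdegree one. -/
def FreeEnd : Prop :=
  ∃ w : V, ∀ n : ℕ, 0 < n → ∀ v ∈ T.childN n w, (T.child v).ncard = 1

end DirTree

/-- Membership in the weighted space `L^p(T,λ)`. -/
def MemLp' {V : Type} (lam : V → ℝ) (p : ℝ) (f : V → ℂ) : Prop :=
  Summable (fun v => ‖f v‖ ^ p * lam v)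

/-- The norm of the weighted space `L^p(T,λ)`. -/
noncomputable def pNorm {V : Type} (lam : V → ℝ) (p : ℝ) (f : V → ℂ) : ℝ :=
  (∑' v, ‖f v‖ ^ p * lam v) ^ (1 / p)

/-- Boundedness of an operator on `L^p(T,λ)`. -/
def BoundedOn {V : Type} (lam : V → ℝ) (p : ℝ) (A : (V → ℂ) → (V → ℂ)) : Prop :=
  ∃ C : ℝ, 0 ≤ C ∧ ∀ f : V → ℂ, MemLp' lam p f →
    MemLp' lam p (A f) ∧ pNorm lam p (A f) ≤ C * pNorm lam p f

/-- Hypercyclicity of an operator on `L^p(T,λ)`: some `f ∈ L^p(T,λ)` has dense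
orbit `{Aⁿ f : n ∈ ℕ}`. -/
def Hypercyclic {V : Type} (lam : V → ℝ) (p : ℝ) (A : (V → ℂ) → (V → ℂ)) : Prop :=
  ∃ f : V → ℂ, MemLp' lam p f ∧ ∀ g : V → ℂ, MemLp' lam p g → ∀ ε : ℝ, 0 < ε →
    ∃ n : ℕ, MemLp' lam p (A^[n] f - g) ∧ pNorm lam p (A^[n] f - g) < ε

theorem crit {X : Type*} [NormedAddCommGroup X] [NormedSpace ℂ X] [CompleteSpace X]
    (A : X →L[ℂ] X) (D : Set X) (hs : TopologicalSpace.IsSeparable D)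
    (hd : Dense D)
    (h : ∀ x ∈ D, ∀ ε : ℝ, 0 < ε → ∀ N : ℕ, ∃ n ≥ N, ∃ y : X, ‖y‖ < ε ∧ (A ^ n) y = x ∧
      ∃ M : ℕ, ∀ m ≥ M, (A ^ m) y = 0) :
    ∃ x : X, ∀ g : X, ∀ ε : ℝ, 0 < ε → ∃ n : ℕ, ‖(A ^ n) x - g‖ < ε := by
  obtain ⟨t, htD, htc, htd⟩ := hs.exists_countable_dense_subset
  have htd' : Dense t := fun x => by
    have := closure_mono htd (hd x)
    rwa [closure_closure] at this
  have htne : t.Nonempty := htd'.nonempty_iff.2 ⟨0⟩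
  obtain ⟨s, rfl⟩ := htc.exists_eq_range htne
  have h2 : ∀ j N : ℕ, ∃ n y N', N ≤ n ∧ n ≤ N' ∧
      ‖y‖ < (1/4 : ℝ)^j / (1 + ‖A‖)^N ∧ (A ^ n) y = s (Nat.unpair j).1 ∧
      ∀ m ≥ N', (A ^ m) y = 0 := by
    intro j N
    obtain ⟨n, hn, y, hy, hA, M, hM⟩ := h (s (Nat.unpair j).1) (htD ⟨_, rfl⟩)
      ((1/4 : ℝ)^j / (1 + ‖A‖)^N) (by positivity) N
    exact ⟨n, y, max n M, hn, le_max_left _ _, hy, hA, fun m hm => hM m (le_trans (le_max_right _ _) hm)⟩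
  choose n y N' hn hN' hy hA hM using h2
  let N : ℕ → ℕ := fun j => Nat.rec 0 (fun j N => N' j N) j
  have hNs : ∀ j, N (j+1) = N' j (N j) := fun j => rfl
  have hNm : Monotone N := monotone_nat_of_le_succ fun j => by
    rw [hNs]; exact (hn _ _).trans (hN' _ _)
  have hone : (1:ℝ) ≤ 1 + ‖A‖ := by linarith [norm_nonneg A]
  let Y : ℕ → X := fun j => y j (N j)
  have hYn : ∀ j, ‖Y j‖ * (1 + ‖A‖)^(N j) ≤ (1/4 : ℝ)^j := fun j => by
    have := hy j (N j)
    rw [lt_div_iff₀ (by positivity)] at this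
    exact this.le
  have hYs : Summable Y := by
    refine Summable.of_norm_bounded (g := fun j => (1/4 : ℝ)^j)
      (summable_geometric_of_lt_one (by norm_num) (by norm_num)) fun j => ?_
    refine le_trans ?_ (hYn j)
    exact le_mul_of_one_le_right (norm_nonneg _) (one_le_pow₀ hone)
  have key : ∀ j, ‖(A ^ (n j (N j))) (∑' i, Y i) - s (Nat.unpair j).1‖ ≤ 2 * (1/2:ℝ)^j := by
    intro j
    have h1 := (hYs.hasSum.mapL (A ^ (n j (N j)))).sub
      (hasSum_ite_eq j (s (Nat.unpair j).1))
    rw [← h1.tsum_eq]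
    refine tsum_of_norm_bounded (g := fun i => (1/2:ℝ)^i * (1/2:ℝ)^j)
      (hasSum_geometric_two.mul_right _) fun i => ?_
    rcases lt_trichotomy i j with hij | rfl | hij
    · have : (A ^ (n j (N j))) (Y i) = 0 := by
        apply hM
        rw [← hNs]
        exact (hNm hij).trans (hn _ _)
      simp only [this, if_neg hij.ne, sub_zero, norm_zero]
      positivity
    · simp only [if_true, Y, hA, sub_self, norm_zero]
      positivity
    · simp only [if_neg hij.ne', sub_zero]
      calc ‖(A ^ (n j (N j))) (Y i)‖ ≤ ‖A ^ (n j (N j))‖ * ‖Y i‖ := ContinuousLinearMap.le_opNorm _ _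
        _ ≤ (1 + ‖A‖)^(N i) * ‖Y i‖ := by
          gcongr
          calc ‖A ^ (n j (N j))‖ ≤ (1 + ‖A‖) ^ (n j (N j)) := by
                rcases Nat.eq_zero_or_pos (n j (N j)) with h0 | h0
                · rw [h0, pow_zero, pow_zero]; exact ContinuousLinearMap.norm_id_le
                · exact (norm_pow_le' A h0).trans (by gcongr; linarith)
            _ ≤ _ := pow_le_pow_right₀ hone ((hN' _ _).trans (hNm hij))
        _ ≤ (1/4)^i := by rw [mul_comm]; exact hYn i
        _ = (1/2)^i * (1/2)^i := by rw [← mul_pow]; norm_num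
        _ ≤ _ := by
          apply mul_le_mul_of_nonneg_left _ (by positivity)
          exact pow_le_pow_of_le_one (by norm_num) (by norm_num) hij.le
  refine ⟨∑' i, Y i, fun g ε hε => ?_⟩
  obtain ⟨_, hi, i, rfl⟩ := Metric.dense_iff.1 htd' g (ε/2) (by positivity)
  obtain ⟨J, hJ⟩ := exists_pow_lt_of_lt_one (show 0 < ε/4 by positivity) (show (1/2:ℝ) < 1 by norm_num)
  have hk := key (Nat.pair i J)
  rw [Nat.unpair_pair] at hk
  refine ⟨n (Nat.pair i J) (N (Nat.pair i J)),
    lt_of_le_of_lt (norm_sub_le_norm_sub_add_norm_sub _ (s i) _) ?_⟩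
  have : (1/2:ℝ)^(Nat.pair i J) ≤ (1/2)^J :=
    pow_le_pow_of_le_one (by norm_num) (by norm_num) (Nat.right_le_pair _ _)
  rw [Metric.mem_ball, dist_eq_norm] at hi
  simp only at hk
  linarith

theorem crit_span {X : Type*} [NormedAddCommGroup X] [NormedSpace ℂ X] [CompleteSpace X]
    (A : X →L[ℂ] X) {V : Type} [Countable V] (e : V → X)
    (hd : Dense (Submodule.span ℂ (Set.range e) : Set X))
    (nk : ℕ → ℕ) (hnk : StrictMono nk)
    (h : ∀ u, ∀ ε : ℝ, 0 < ε → ∀ᶠ k in atTop, ∃ y : X, ‖y‖ < ε ∧ (A ^ (nk k)) y = e u ∧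
      ∃ M : ℕ, ∀ m ≥ M, (A ^ m) y = 0) :
    ∃ x : X, ∀ g : X, ∀ ε : ℝ, 0 < ε → ∃ n : ℕ, ‖(A ^ n) x - g‖ < ε := by
  refine crit A (Submodule.span ℂ (Set.range e) : Set X)
    ((Set.countable_range e).isSeparable.span (R := ℂ)) hd ?_
  have key : ∀ x ∈ Submodule.span ℂ (Set.range e), ∀ ε : ℝ, 0 < ε → ∀ᶠ k in atTop,
      ∃ y : X, ‖y‖ < ε ∧ (A ^ (nk k)) y = x ∧ ∃ M : ℕ, ∀ m ≥ M, (A ^ m) y = 0 := by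
    intro x hx
    induction hx using Submodule.span_induction with
    | mem x hx => obtain ⟨u, rfl⟩ := hx; exact h u
    | zero =>
      intro ε hε
      exact Eventually.of_forall fun k => ⟨0, by simpa using hε, by simp, 0, by simp⟩
    | add x x' _ _ h1 h2 =>
      intro ε hε
      filter_upwards [h1 (ε/2) (by positivity), h2 (ε/2) (by positivity)] with k hk hk'
      obtain ⟨y, hy, hA, M, hM⟩ := hk
      obtain ⟨y', hy', hA', M', hM'⟩ := hk'
      refine ⟨y + y', ?_, by rw [map_add, hA, hA'], max M M', fun m hm => ?_⟩
      · have := norm_add_le y y'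
        linarith
      · rw [map_add, hM m ((le_max_left _ _).trans hm), hM' m ((le_max_right _ _).trans hm),
          add_zero]
    | smul c x _ h1 =>
      intro ε hε
      filter_upwards [h1 (ε/(‖c‖ + 1)) (by positivity)] with k hk
      obtain ⟨y, hy, hA, M, hM⟩ := hk
      refine ⟨c • y, ?_, by rw [map_smul, hA], M, fun m hm => by
        rw [map_smul, hM m hm, smul_zero]⟩
      rw [lt_div_iff₀ (by positivity)] at hy
      rw [norm_smul]
      nlinarith [norm_nonneg y, norm_nonneg c]
  intro x hx ε hε N
  obtain ⟨k, hk, hkN⟩ := ((key x hx ε hε).and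
    (hnk.tendsto_atTop.eventually_ge_atTop N)).exists
  exact ⟨nk k, hkN, hk⟩

namespace DirTree

variable {V : Type} (T : DirTree V)

theorem finite_child (u : V) : (T.child u).Finite := T.finOut u

theorem childN_succ (n : ℕ) (u : V) :
    T.childN (n + 1) u = ⋃ v ∈ T.child u, T.childN n v := by
  ext w
  simp [childN]

theorem finite_childN (n : ℕ) : ∀ u : V, (T.childN n u).Finite := by
  induction n with
  | zero => intro u; exact Set.finite_singleton u
  | succ n ih =>
    intro u
    rw [childN_succ]
    exact (T.finite_child u).biUnion fun v _ => ih v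

theorem nonempty_childN (hleafless : ∀ u : V, ¬ T.IsLeaf u) (n : ℕ) :
    ∀ u : V, (T.childN n u).Nonempty := by
  induction n with
  | zero => intro u; exact Set.singleton_nonempty u
  | succ n ih =>
    intro u
    obtain ⟨v, hv⟩ := not_not.1 (hleafless u)
    obtain ⟨w, hw⟩ := ih v
    exact ⟨w, v, hv, hw⟩

theorem childN_snoc (n : ℕ) : ∀ {r u v : V}, u ∈ T.childN n r → T.E u v →
    v ∈ T.childN (n + 1) r := by
  induction n with
  | zero =>
    intro r u v hu huv
    have : u = r := hu
    subst this
    exact ⟨v, huv, rfl⟩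
  | succ n ih =>
    intro r u v hu huv
    obtain ⟨w, hw, huw⟩ := hu
    exact ⟨w, hw, ih huw huv⟩

theorem childN_unsnoc (n : ℕ) : ∀ {r v : V}, v ∈ T.childN (n + 1) r →
    ∃ u ∈ T.childN n r, T.E u v := by
  induction n with
  | zero =>
    intro r v hv
    obtain ⟨w, hw, hvw⟩ := hv
    have : v = w := hvw
    subst this
    exact ⟨r, rfl, hw⟩
  | succ n ih =>
    intro r v hv
    obtain ⟨w, hw, hvw⟩ := hv
    obtain ⟨u, hu, huv⟩ := ih hvw
    exact ⟨u, ⟨w, hw, hu⟩, huv⟩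

theorem exists_depth {r : V} (hr : T.IsRoot r) (v : V) : ∃ n, v ∈ T.childN n r := by
  have key : ∀ {a b : V}, (SimpleGraph.fromRel T.E).Walk a b → (∃ n, a ∈ T.childN n r) →
      ∃ n, b ∈ T.childN n r := by
    intro a b p
    induction p with
    | nil => exact id
    | cons hadj _ ih =>
      rintro ⟨n, hn⟩
      apply ih
      rw [SimpleGraph.fromRel_adj] at hadj
      rcases hadj.2 with h | h
      · exact ⟨n + 1, T.childN_snoc n hn h⟩
      · cases n with
        | zero =>
          have h0 : _ = r := hn
          rw [h0] at h
          exact absurd h (hr _)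
        | succ n =>
          obtain ⟨u, hu, huv⟩ := T.childN_unsnoc n hn
          rw [T.indeg h huv]
          exact ⟨n, hu⟩
  obtain ⟨p⟩ := T.conn.preconnected r v
  exact key p ⟨0, rfl⟩

theorem sstar_add (lam : V → ℝ) (f g : V → ℂ) :
    T.sstar lam (f + g) = T.sstar lam f + T.sstar lam g := by
  ext u
  have := (T.finite_child u).to_subtype
  simp only [sstar, Pi.add_apply, add_mul]
  exact Summable.tsum_add (Summable.of_finite) (Summable.of_finite)

theorem sstar_smul (lam : V → ℝ) (c : ℂ) (f : V → ℂ) :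
    T.sstar lam (c • f) = c • T.sstar lam f := by
  ext u
  simp only [sstar, Pi.smul_apply, smul_eq_mul, mul_assoc]
  exact tsum_mul_left

theorem sstar_single (lam : V → ℝ) {u v : V} (h : T.E u v) :
    T.sstar lam (Pi.single v 1) = ((lam v / lam u : ℝ) : ℂ) • Pi.single u 1 := by
  ext u'
  simp only [sstar, Pi.smul_apply, smul_eq_mul]
  by_cases hu : u' = u
  · subst hu
    rw [tsum_eq_single (⟨v, h⟩ : T.child u')]
    · simp
    · intro b hb
      have : b.1 ≠ v := fun hh => hb (Subtype.ext hh)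
      simp [this]
  · rw [Pi.single_eq_of_ne hu, mul_zero]
    convert tsum_zero with b
    have : b.1 ≠ v := fun hh => hu (T.indeg (hh ▸ b.2) h)
    simp [this]

theorem sstar_single_root (lam : V → ℝ) {r : V} (h : T.IsRoot r) :
    T.sstar lam (Pi.single r 1) = 0 := by
  ext u'
  simp only [sstar, Pi.zero_apply]
  convert tsum_zero with b
  have : b.1 ≠ r := fun hh => h u' (hh ▸ b.2)
  simp [this]

end DirTree

set_option maxHeartbeats 2000000 in
theorem main_aux {V : Type} [Countable V] (T : DirTree V)
    (hleafless : ∀ u : V, ¬ T.IsLeaf u) (hroot : ∃ r : V, T.IsRoot r)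
    (lam : V → ℝ) (hlam : ∀ v : V, 0 < lam v) (q : ℝ) (hq : 1 < q)
    (hb : BoundedOn lam q (T.sstar lam))
    (nk : ℕ → ℕ) (hnk : StrictMono nk)
    (hOmega : ∀ u : V,
      Tendsto (fun k : ℕ =>
          (∑' v : T.childN (nk k) u, (lam v.1) ^ ((1 : ℝ) - q)) /
            ((T.gam u (nk k) : ℝ)) ^ q)
        atTop (nhds 0)) :
    Hypercyclic lam q (T.sstar lam) := by
  have hq0 : 0 < q := by linarith
  obtain ⟨r, hr⟩ := hroot
  set p : ℝ≥0∞ := ENNReal.ofReal q with hp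
  have hpq : p.toReal = q := ENNReal.toReal_ofReal hq0.le
  have hp0 : 0 < p.toReal := by rw [hpq]; exact hq0
  have : Fact (1 ≤ p) := ⟨by rw [hp]; exact ENNReal.one_le_ofReal.2 hq.le⟩
  let w : V → ℝ := fun v => lam v ^ (1 / q)
  have hw : ∀ v, 0 < w v := fun v => Real.rpow_pos_of_pos (hlam v) _
  have hwc : ∀ v, (w v : ℂ) ≠ 0 := fun v => by exact_mod_cast (hw v).ne'
  have hwq : ∀ v, w v ^ q = lam v := fun v => by
    simp only [w]
    rw [← Real.rpow_mul (hlam v).le, one_div_mul_cancel hq0.ne', Real.rpow_one]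
  let X := lp (fun _ : V => ℂ) p
  let psi : (V → ℂ) → V → ℂ := fun x v => x v / w v
  let phi : (V → ℂ) → V → ℂ := fun x v => x v * w v
  have hpp : ∀ x, psi (phi x) = x := fun x => by
    ext v; simp only [psi, phi]; exact mul_div_cancel_right₀ _ (hwc v)
  have hpp' : ∀ x, phi (psi x) = x := fun x => by
    ext v; simp only [psi, phi]; exact div_mul_cancel₀ _ (hwc v)
  have hterm : ∀ (x : V → ℂ) v, ‖phi x v‖ ^ q = ‖x v‖ ^ q * lam v := fun x v => by
    simp only [phi]
    rw [norm_mul, Complex.norm_real, Real.norm_of_nonneg (hw v).le,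
      Real.mul_rpow (norm_nonneg _) (hw v).le, hwq]
  have hmem : ∀ x : V → ℂ, Memℓp (phi x) p ↔ MemLp' lam q x := fun x => by
    rw [memℓp_gen_iff hp0, hpq]
    simp only [hterm, MemLp']
  have hterm' : ∀ (x : V → ℂ) v, ‖x v‖ ^ q = ‖psi x v‖ ^ q * lam v := fun x v => by
    rw [← hterm, hpp']
  have hnorm : ∀ x : X, ‖x‖ = pNorm lam q (psi x) := fun x => by
    rw [lp.norm_eq_tsum_rpow hp0, hpq, pNorm]
    simp only [← hterm', one_div]
  have hmem' : ∀ x : X, MemLp' lam q (psi x) := fun x => by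
    rw [← hmem, hpp']; exact x.2
  obtain ⟨C, hC, hCb⟩ := hb
  have psi_add : ∀ x y, psi (x + y) = psi x + psi y := fun x y => by
    ext v; simp only [psi, Pi.add_apply]; ring
  have psi_sub : ∀ x y, psi (x - y) = psi x - psi y := fun x y => by
    ext v; simp only [psi, Pi.sub_apply]; ring
  have psi_smul : ∀ (c : ℂ) x, psi (c • x) = c • psi x := fun c x => by
    ext v; simp only [psi, Pi.smul_apply, smul_eq_mul]; ring
  have phi_add : ∀ x y, phi (x + y) = phi x + phi y := fun x y => by
    ext v; simp only [phi, Pi.add_apply]; ring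
  have phi_smul : ∀ (c : ℂ) x, phi (c • x) = c • phi x := fun c x => by
    ext v; simp only [phi, Pi.smul_apply, smul_eq_mul]; ring
  let Al : X →ₗ[ℂ] X :=
    { toFun := fun x => ⟨phi (T.sstar lam (psi x)), (hmem _).2 (hCb _ (hmem' x)).1⟩
      map_add' := fun x y => by
        apply lp.ext
        change phi (T.sstar lam (psi (⇑x + ⇑y))) = phi _ + phi _
        rw [psi_add, T.sstar_add, phi_add]
      map_smul' := fun c x => by
        apply lp.ext
        change phi (T.sstar lam (psi (c • ⇑x))) = c • phi _
        rw [psi_smul, T.sstar_smul, phi_smul] }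
  have hAl : ∀ x : X, psi (Al x) = T.sstar lam (psi x) := fun x => hpp _
  let A : X →L[ℂ] X := Al.mkContinuous C (fun x => by
    rw [hnorm, hnorm, hAl]
    exact (hCb _ (hmem' x)).2)
  have hA : ∀ x : X, psi (A x) = T.sstar lam (psi x) := hAl
  have hAn : ∀ (n : ℕ) (x : X), psi ((A ^ n) x) = (T.sstar lam)^[n] (psi x) := by
    intro n
    induction n with
    | zero => intro x; rfl
    | succ n ih =>
      intro x
      rw [pow_succ', Function.iterate_succ_apply', ← ih]
      exact hA _
  have psi_inj : ∀ x y : X, psi x = psi y → x = y := fun x y h => by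
    apply lp.ext
    rw [← hpp' x, h, hpp']
  let e : V → X := fun v => lp.single p v (w v : ℂ)
  have hpe : ∀ v, psi (e v) = Pi.single v 1 := fun v => by
    ext u
    simp only [psi, e, lp.single_apply]
    by_cases h : u = v
    · subst h
      rw [Pi.single_eq_same, Pi.single_eq_same, div_self (hwc _)]
    · rw [Pi.single_eq_of_ne h, Pi.single_eq_of_ne h, zero_div]
  have hAe : ∀ u v, T.E u v → A (e v) = ((lam v / lam u : ℝ) : ℂ) • e u := fun u v h => by
    apply psi_inj
    rw [hA, hpe, T.sstar_single lam h]
    exact ((psi_smul _ _).trans (by rw [hpe])).symm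
  have hAr : A (e r) = 0 := by
    apply psi_inj
    rw [hA, hpe, T.sstar_single_root lam hr]
    ext v
    simp [psi]
  have hAne : ∀ n u v, v ∈ T.childN n u →
      (A ^ n) (e v) = ((lam v / lam u : ℝ) : ℂ) • e u := by
    intro n
    induction n with
    | zero =>
      intro u v h
      have : v = u := h
      subst this
      rw [div_self (hlam v).ne']
      simp
    | succ n ih =>
      intro u v h
      obtain ⟨x, hx, hv⟩ := h
      rw [pow_succ', mul_apply_eq_comp, ih x v hv, map_smul, hAe u x hx, smul_smul,
        ← Complex.ofReal_mul, div_mul_div_cancel₀ (hlam x).ne']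
  have hkill : ∀ v, ∃ M : ℕ, ∀ m ≥ M, (A ^ m) (e v) = 0 := fun v => by
    obtain ⟨d, hd⟩ := T.exists_depth hr v
    refine ⟨d + 1, fun m hm => ?_⟩
    obtain ⟨k, rfl⟩ := Nat.exists_eq_add_of_le hm
    rw [add_comm, add_comm d 1, pow_add, pow_add, mul_apply_eq_comp,
      mul_apply_eq_comp, hAne d r v hd, map_smul, pow_one, hAr, smul_zero, map_zero]
  have hdense : Dense (Submodule.span ℂ (Set.range e) : Set X) := by
    intro x
    have hs := lp.hasSum_single (p := p) ENNReal.ofReal_ne_top x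
    refine mem_closure_of_tendsto hs (Eventually.of_forall fun s => ?_)
    refine Submodule.sum_mem _ fun v _ => ?_
    have : lp.single p v (x v) = (x v / w v) • e v := by
      simp only [e]
      rw [← lp.single_smul, smul_eq_mul, div_mul_cancel₀ _ (hwc v)]
    rw [this]
    exact Submodule.smul_mem _ _ (Submodule.subset_span ⟨v, rfl⟩)
  have hbasis : ∀ u, ∀ ε : ℝ, 0 < ε → ∀ᶠ k in atTop, ∃ y : X, ‖y‖ < ε ∧
      (A ^ (nk k)) y = e u ∧ ∃ M : ℕ, ∀ m ≥ M, (A ^ m) y = 0 := by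
    intro u ε hε
    have hlim := (hOmega u).const_mul (lam u ^ q)
    rw [mul_zero] at hlim
    filter_upwards [hlim.eventually_lt_const (Real.rpow_pos_of_pos hε q)] with k hk
    set F : Finset V := (T.finite_childN (nk k) u).toFinset with hF
    have hFm : ∀ v, v ∈ F ↔ v ∈ T.childN (nk k) u := fun v => by simp [hF]
    have hg : T.gam u (nk k) = F.card := Set.ncard_eq_toFinset_card _ _
    have hg0 : 0 < (F.card : ℝ) := by
      obtain ⟨v, hv⟩ := T.nonempty_childN hleafless (nk k) u
      exact_mod_cast Finset.card_pos.2 ⟨v, (hFm v).2 hv⟩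
    let c : V → ℝ := fun v => lam u / (lam v * F.card)
    have hc : ∀ v, 0 < c v := fun v => by
      have := hlam v
      have := hlam u
      positivity
    refine ⟨∑ v ∈ F, (c v : ℂ) • e v, ?_, ?_, ?_⟩
    · have h1 : ∑ v ∈ F, (c v : ℂ) • e v
          = ∑ v ∈ F, lp.single p v ((fun v => (c v : ℂ) * w v) v) := by
        refine Finset.sum_congr rfl fun v _ => ?_
        simp only [e]
        rw [← lp.single_smul, smul_eq_mul]
      have h2 := lp.norm_sum_single hp0 (fun v => (c v : ℂ) * w v) F
      rw [← h1, hpq] at h2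
      refine (Real.rpow_lt_rpow_iff (norm_nonneg _) hε.le hq0).1 ?_
      refine lt_of_eq_of_lt ?_ hk
      rw [h2, hg]
      have h3 : ∑' v : T.childN (nk k) u, (lam v.1) ^ ((1 : ℝ) - q)
          = ∑ v ∈ F, lam v ^ (1 - q) := by
        rw [← Finset.tsum_subtype F (fun v => lam v ^ (1 - q))]
        have : T.childN (nk k) u = (F : Set V) := by ext v; simp [hF]
        rw [this]
        rfl
      rw [h3, Finset.sum_div, Finset.mul_sum]
      refine Finset.sum_congr rfl fun v _ => ?_
      rw [norm_mul, Complex.norm_real, Complex.norm_real, Real.norm_of_nonneg (hw v).le,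
        Real.norm_of_nonneg (hc v).le, Real.mul_rpow (hc v).le (hw v).le, hwq]
      simp only [c]
      rw [Real.div_rpow (hlam u).le (by have := hlam v; positivity),
        Real.mul_rpow (hlam v).le hg0.le, Real.rpow_sub (hlam v), Real.rpow_one]
      have := Real.rpow_pos_of_pos (hlam v) q
      have := Real.rpow_pos_of_pos hg0 q
      field_simp
    · rw [map_sum]
      have : ∀ v ∈ F, (A ^ nk k) ((c v : ℂ) • e v) = ((F.card : ℂ)⁻¹) • e u := by
        intro v hv
        rw [map_smul, hAne _ u v ((hFm v).1 hv), smul_smul, ← Complex.ofReal_mul]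
        congr 1
        rw [← Complex.ofReal_natCast, ← Complex.ofReal_inv]
        congr 1
        have := (hlam v).ne'
        have := (hlam u).ne'
        simp only [c]
        field_simp
      rw [Finset.sum_congr rfl this, Finset.sum_const, ← Nat.cast_smul_eq_nsmul ℂ, smul_smul,
        mul_inv_cancel₀, one_smul]
      exact_mod_cast hg0.ne'
    · choose M hM using hkill
      refine ⟨F.sup M, fun m hm => ?_⟩
      rw [map_sum]
      refine Finset.sum_eq_zero fun v hv => ?_
      rw [map_smul, hM v m ((Finset.le_sup hv).trans hm), smul_zero]
  obtain ⟨x, hx⟩ := crit_span A e hdense nk hnk hbasis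
  refine ⟨psi x, hmem' x, fun g hg ε hε => ?_⟩
  let G : X := ⟨phi g, (hmem g).2 hg⟩
  obtain ⟨n, hn⟩ := hx G ε hε
  have h1 : psi ((A ^ n) x - G : X) = (T.sstar lam)^[n] (psi x) - g := by
    rw [← hAn]
    refine (psi_sub _ _).trans ?_
    congr 1
    exact hpp g
  refine ⟨n, ?_, ?_⟩
  · rw [← h1]; exact hmem' _
  · rw [← h1, ← hnorm]; exact hn

/-- For a leafless rooted directed tree, `1 < q < ∞`, and
bounded `S*` on `L^q(T,λ)`: if there is a strictly increasing sequence `n_k`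
with `γ(u,n_k)^{-q} ∑_{v ∈ childⁿᵏ(u)} λ_v^{1-q} → 0` for every `u`, then `S*`
is hypercyclic. -/
theorem stmt_18 {V : Type} [Countable V] [Infinite V] (T : DirTree V)
    (hleafless : ∀ u : V, ¬ T.IsLeaf u) (hroot : ∃ r : V, T.IsRoot r)
    (lam : V → ℝ) (hlam : ∀ v : V, 0 < lam v) (q : ℝ) (hq : 1 < q)
    (hb : BoundedOn lam q (T.sstar lam))
    (nk : ℕ → ℕ) (hnk : StrictMono nk)
    (hOmega : ∀ u : V,
      Tendsto (fun k : ℕ =>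
          (∑' v : T.childN (nk k) u, (lam v.1) ^ ((1 : ℝ) - q)) /
            ((T.gam u (nk k) : ℝ)) ^ q)
        atTop (nhds 0)) :
    Hypercyclic lam q (T.sstar lam) := by
  exact main_aux T hleafless hroot lam hlam q hq hb nk hnk hOmega
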